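/- Let f : ℝ^n × ℝ^p → [−∞, ∞] be a proper nearly convex function and let F : ℝ^n ⇒ ℝ^p be a nearly convex set-valued mapping. Suppose ri(dom f) ∩ ri(gph F) ≠ ∅. Then the optimal value function μ(x) = inf{f(x, y) | y ∈ F(x)} (with inf over the empty set equal to ∞) is a nearly convex function. -/

import Mathlib

/-!
Let `S = {((x, y), r) | f (x, y) ≤ r and y ∈ F x}`, the intersection of `epi f` with the cylinder
over `gph F`. Its projection to the coordinates `(x, r)` is contained in the epigraph of the optimal
value function and is dense in it: even if the infimum at `x` is not attained, every `r'` strictly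
above it satisfies `f (x, y) ≤ r'` for some `y ∈ F x`. Projections preserve near convexity, so it is
enough that `S` is nearly convex.

Two nearly convex sets with a common relative interior point have a nearly convex intersection,
because by the line-segment principle the open segment from that point to any point of both sets
runs inside both underlying convex sets. Such a point of `epi f` and the cylinder exists because
`dom f` is the projection of `epi f`, and relative interior points of a projection of a nearly
convex set lift to relative interior points of the set.
-/

open Set Metric

noncomputable section

/-- A set is *nearly convex* if it lies between a convex set and its closure. -/
def NearlyConvex {E : Type*} [NormedAddCommGroup E] [NormedSpace ℝ E] (s : Set E) : Prop :=
  ∃ C : Set E, Convex ℝ C ∧ C ⊆ s ∧ s ⊆ closure C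

/-- The *relative interior* of a set: points `a ∈ s` admitting `δ > 0` with
`B(a,δ) ∩ aff s ⊆ s`. -/
def ri {E : Type*} [NormedAddCommGroup E] [NormedSpace ℝ E] (s : Set E) : Set E :=
  {a | a ∈ s ∧ ∃ δ > 0, Metric.ball a δ ∩ (affineSpan ℝ s : Set E) ⊆ s}

/-- The graph of a set-valued mapping. -/
def gph {E P : Type*} (F : E → Set P) : Set (E × P) := {q | q.2 ∈ F q.1}

/-- The domain of a set-valued mapping. -/
def domSV {E P : Type*} (F : E → Set P) : Set E := {x | (F x).Nonempty}

/-- The epigraph of an extended-real-valued function. -/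
def epiF {E : Type*} (f : E → EReal) : Set (E × ℝ) := {p | f p.1 ≤ (p.2 : EReal)}

/-- The effective domain of an extended-real-valued function. -/
def domF {E : Type*} (f : E → EReal) : Set E := {x | f x < ⊤}

/-- A function is proper if its domain is nonempty and it never takes the value `⊥`. -/
def ProperFn {E : Type*} (f : E → EReal) : Prop :=
  {x | f x < ⊤}.Nonempty ∧ ∀ x, f x ≠ ⊥

open Filter Topology AffineMap

section RelativeInterior

variable {E F : Type*} [NormedAddCommGroup E] [NormedSpace ℝ E]
  [NormedAddCommGroup F] [NormedSpace ℝ F]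

theorem mem_ri {s : Set E} {a : E} : a ∈ ri s ↔ a ∈ s ∧ s ∈ 𝓝[affineSpan ℝ s] a := by
  rw [Metric.mem_nhdsWithin_iff]
  rfl

theorem ri_subset (s : Set E) : ri s ⊆ s := fun _ ha => ha.1

theorem ri_eq_intrinsicInterior (s : Set E) : ri s = intrinsicInterior ℝ s := by
  ext a
  simp only [mem_intrinsicInterior, mem_interior_iff_mem_nhds]
  constructor
  · intro ha
    have haA : a ∈ affineSpan ℝ s := subset_affineSpan ℝ s ha.1
    exact ⟨⟨a, haA⟩, preimage_coe_mem_nhds_subtype.2 (mem_ri.1 ha).2, rfl⟩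
  · rintro ⟨a, ha, rfl⟩
    have has : a ∈ ((↑) ⁻¹' s : Set (affineSpan ℝ s)) := mem_of_mem_nhds ha
    exact mem_ri.2 ⟨has, preimage_coe_mem_nhds_subtype.1 ha⟩

theorem preimage_ri_subset (L : E →ᴬ[ℝ] F) (s : Set F) : L ⁻¹' ri s ⊆ ri (L ⁻¹' s) := by
  intro a ha
  obtain ⟨has, hnhds⟩ := mem_ri.1 ha
  have hspan : affineSpan ℝ (L ⁻¹' s) ≤ (affineSpan ℝ s).comap (L : E →ᵃ[ℝ] F) :=
    affineSpan_le.2 (preimage_mono (subset_affineSpan ℝ s))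
  have hmaps : MapsTo L (affineSpan ℝ (L ⁻¹' s)) (affineSpan ℝ s) := hspan
  exact mem_ri.2 ⟨has, L.continuous.continuousWithinAt.tendsto_nhdsWithin hmaps hnhds⟩

theorem exists_mem_openSegment_of_mem_ri {s : Set E} {a b : E} (ha : a ∈ ri s)
    (hb : b ∈ affineSpan ℝ s) : ∃ c ∈ s, a ∈ openSegment ℝ b c := by
  obtain ⟨has, hnhds⟩ := mem_ri.1 ha
  have hlim : Tendsto (fun t : ℝ => lineMap b a t) (𝓝[>] 1) (𝓝[affineSpan ℝ s] a) := by
    refine tendsto_nhdsWithin_iff.2 ⟨?_, .of_forall fun t =>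
      lineMap_mem t hb (subset_affineSpan ℝ s has)⟩
    exact (lineMap_continuous.tendsto' 1 a (lineMap_apply_one b a)).mono_left nhdsWithin_le_nhds
  obtain ⟨t, hts, ht⟩ := ((hlim.eventually_mem hnhds).and self_mem_nhdsWithin).exists
  have htpos : 0 < t := zero_lt_one.trans ht
  refine ⟨lineMap b a t, hts, ?_⟩
  rw [openSegment_eq_image_lineMap]
  refine ⟨t⁻¹, ⟨inv_pos.2 htpos, inv_lt_one_of_one_lt₀ ht⟩, ?_⟩
  rw [lineMap_lineMap_right, inv_mul_cancel₀ htpos.ne', lineMap_apply_one]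

variable [FiniteDimensional ℝ E]

theorem closure_subset_affineSpan (s : Set E) : closure s ⊆ affineSpan ℝ s :=
  closure_minimal (subset_affineSpan ℝ s) (AffineSubspace.closed_of_finiteDimensional _)

theorem ri_subset_ri_of_subset_closure {s t : Set E} (hst : s ⊆ t) (hts : t ⊆ closure s) :
    ri s ⊆ ri t := by
  have hspan : affineSpan ℝ t ≤ affineSpan ℝ s :=
    affineSpan_le.2 (hts.trans (closure_subset_affineSpan s))
  intro a ha
  obtain ⟨has, hnhds⟩ := mem_ri.1 ha
  exact mem_ri.2 ⟨hst has, mem_of_superset (nhdsWithin_mono a hspan hnhds) hst⟩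

theorem ri_nonempty {C : Set E} (hC : Convex ℝ C) (hne : C.Nonempty) : (ri C).Nonempty := by
  rw [ri_eq_intrinsicInterior]
  exact hne.intrinsicInterior hC

theorem openSegment_ri_closure_subset_ri {C : Set E} (hC : Convex ℝ C) {a b : E} (ha : a ∈ ri C)
    (hb : b ∈ closure C) : openSegment ℝ a b ⊆ ri C := by
  obtain ⟨haC, hnhds⟩ := mem_ri.1 ha
  rw [openSegment_symm, openSegment_eq_image_lineMap]
  rintro _ ⟨t, ⟨ht0, ht1⟩, rfl⟩
  set p : E := lineMap b a t
  have hpA : p ∈ affineSpan ℝ C :=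
    lineMap_mem t (closure_subset_affineSpan C hb) (subset_affineSpan ℝ C haC)
  have hinv (x y : E) : lineMap x (lineMap x y t⁻¹) t = y := by
    rw [lineMap_lineMap_right, mul_inv_cancel₀ ht0.ne', lineMap_apply_one]
  -- For `(w, b')` near `(p, b)`, the point `c` with `w = lineMap b' c t` is near `a`.
  have hlim : Tendsto (fun q : E × E => lineMap q.2 q.1 t⁻¹)
      (𝓝[affineSpan ℝ C] p ×ˢ 𝓝[C] b) (𝓝[affineSpan ℝ C] a) := by
    refine tendsto_nhdsWithin_iff.2 ⟨?_, ?_⟩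
    · have hpa : lineMap b p t⁻¹ = a := by
        rw [lineMap_lineMap_right, inv_mul_cancel₀ ht0.ne', lineMap_apply_one]
      rw [← hpa]
      exact (tendsto_snd.mono_right nhdsWithin_le_nhds).lineMap
        (tendsto_fst.mono_right nhdsWithin_le_nhds) tendsto_const_nhds
    · filter_upwards [prod_mem_prod self_mem_nhdsWithin self_mem_nhdsWithin] with q hq
      exact lineMap_mem _ (subset_affineSpan ℝ C hq.2) hq.1
  have := mem_closure_iff_nhdsWithin_neBot.1 hb
  have hpC : C ∈ 𝓝[affineSpan ℝ C] p := by
    filter_upwards [(hlim.eventually_mem hnhds).curry] with w hw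
    obtain ⟨b', hcC, hb'C⟩ := (hw.and self_mem_nhdsWithin).exists
    rw [← hinv b' w]
    exact hC.lineMap_mem hb'C hcC ⟨ht0.le, ht1.le⟩
  exact mem_ri.2 ⟨mem_of_mem_nhdsWithin hpA hpC, hpC⟩

theorem ri_subset_image_ri {C : Set E} (hC : Convex ℝ C) (L : E →ᵃ[ℝ] F) {s : Set F}
    (hCs : L '' C ⊆ s) (hsC : s ⊆ L '' closure C) : ri s ⊆ L '' ri C := by
  intro a ha
  have hne : C.Nonempty := closure_nonempty_iff.1 (image_nonempty.1 ⟨a, hsC ha.1⟩)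
  obtain ⟨c, hc⟩ := ri_nonempty hC hne
  have hLc : L c ∈ s := hCs (mem_image_of_mem L hc.1)
  obtain ⟨b, hbs, hab⟩ := exists_mem_openSegment_of_mem_ri ha (subset_affineSpan ℝ s hLc)
  obtain ⟨b, hb, rfl⟩ := hsC hbs
  rw [← image_openSegment] at hab
  exact image_mono (openSegment_ri_closure_subset_ri hC hc hb) hab

theorem ri_eq_of_subset_closure {C s : Set E} (hC : Convex ℝ C) (hCs : C ⊆ s)
    (hsC : s ⊆ closure C) : ri s = ri C := by
  refine Subset.antisymm ?_ (ri_subset_ri_of_subset_closure hCs hsC)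
  simpa using ri_subset_image_ri hC (AffineMap.id ℝ E) (by simpa using hCs) (by simpa using hsC)

theorem closure_inter_closure_subset {C D : Set E} (hC : Convex ℝ C) (hD : Convex ℝ D)
    (h : (ri C ∩ ri D).Nonempty) : closure C ∩ closure D ⊆ closure (C ∩ D) := by
  obtain ⟨a, haC, haD⟩ := h
  rintro b ⟨hbC, hbD⟩
  have hseg : openSegment ℝ a b ⊆ C ∩ D := subset_inter
    ((openSegment_ri_closure_subset_ri hC haC hbC).trans (ri_subset C))
    ((openSegment_ri_closure_subset_ri hD haD hbD).trans (ri_subset D))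
  exact closure_mono hseg (segment_subset_closure_openSegment (right_mem_segment ℝ a b))

end RelativeInterior

namespace NearlyConvex

variable {E F : Type*} [NormedAddCommGroup E] [NormedSpace ℝ E]
  [NormedAddCommGroup F] [NormedSpace ℝ F]

theorem of_subset_closure {s t : Set E} (hs : NearlyConvex s) (hst : s ⊆ t) (hts : t ⊆ closure s) :
    NearlyConvex t := by
  obtain ⟨C, hC, hCs, hsC⟩ := hs
  exact ⟨C, hC, hCs.trans hst, hts.trans (closure_minimal hsC isClosed_closure)⟩

theorem image {s : Set E} (hs : NearlyConvex s) (L : E →ᴬ[ℝ] F) : NearlyConvex (L '' s) := by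
  obtain ⟨C, hC, hCs, hsC⟩ := hs
  exact ⟨L '' C, hC.affine_image (L : E →ᵃ[ℝ] F), image_mono hCs,
    (image_mono hsC).trans (image_closure_subset_closure_image L.continuous)⟩

theorem preimage {s : Set F} (hs : NearlyConvex s) (L : E →ᴬ[ℝ] F) (hL : IsOpenMap L) :
    NearlyConvex (L ⁻¹' s) := by
  obtain ⟨C, hC, hCs, hsC⟩ := hs
  exact ⟨L ⁻¹' C, hC.affine_preimage (L : E →ᵃ[ℝ] F), preimage_mono hCs,
    (preimage_mono hsC).trans hL.preimage_closure_subset_closure_preimage⟩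

theorem ri_image_subset [FiniteDimensional ℝ E] {s : Set E} (hs : NearlyConvex s)
    (L : E →ᵃ[ℝ] F) : ri (L '' s) ⊆ L '' ri s := by
  obtain ⟨C, hC, hCs, hsC⟩ := hs
  rw [ri_eq_of_subset_closure hC hCs hsC]
  exact ri_subset_image_ri hC L (image_mono hCs) (image_mono hsC)

theorem inter [FiniteDimensional ℝ E] {s t : Set E} (hs : NearlyConvex s) (ht : NearlyConvex t)
    (h : (ri s ∩ ri t).Nonempty) : NearlyConvex (s ∩ t) := by
  obtain ⟨C, hC, hCs, hsC⟩ := hs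
  obtain ⟨D, hD, hDt, htD⟩ := ht
  rw [ri_eq_of_subset_closure hC hCs hsC, ri_eq_of_subset_closure hD hDt htD] at h
  exact ⟨C ∩ D, hC.inter hD, inter_subset_inter hCs hDt,
    (inter_subset_inter hsC htD).trans (closure_inter_closure_subset hC hD h)⟩

end NearlyConvex

section OptimalValue

/-- The optimal value (marginal) function `μ(x) = inf {f (x, y) | y ∈ F x}` of the paper; the
infimum is taken in `EReal`, so it is `⊤` where `F x` is empty. -/
def optimalValue {E P : Type*} (f : E × P → EReal) (F : E → Set P) : E → EReal :=
  fun x => ⨅ y ∈ F x, f (x, y)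

theorem image_fst_epiF {E : Type*} (f : E → EReal) : Prod.fst '' epiF f = domF f := by
  ext x
  constructor
  · rintro ⟨⟨x, r⟩, hr, rfl⟩
    exact lt_of_le_of_lt hr (EReal.coe_lt_top r)
  · intro hx
    obtain ⟨r, hr, -⟩ := EReal.lt_iff_exists_real_btwn.1 hx
    exact ⟨(x, r), hr.le, rfl⟩

theorem image_subset_epiF_optimalValue {E P : Type*} (f : E × P → EReal) (F : E → Set P) :
    Prod.map Prod.fst id '' (epiF f ∩ Prod.fst ⁻¹' gph F) ⊆ epiF (optimalValue f F) := by
  rintro _ ⟨⟨⟨x, y⟩, r⟩, ⟨hfr, hy⟩, rfl⟩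
  exact iInf₂_le_of_le (f := fun y (_ : y ∈ F x) => f (x, y)) y hy hfr

theorem epiF_optimalValue_subset_closure {E P : Type*} [TopologicalSpace E] (f : E × P → EReal)
    (F : E → Set P) : epiF (optimalValue f F) ⊆
      closure (Prod.map Prod.fst id '' (epiF f ∩ Prod.fst ⁻¹' gph F)) := by
  rintro ⟨x, r⟩ hr
  have hlim : Tendsto (fun r' : ℝ => (x, r')) (𝓝[>] r) (𝓝 (x, r)) :=
    (Continuous.prodMk_right x).continuousWithinAt
  refine mem_closure_of_tendsto hlim ?_
  filter_upwards [self_mem_nhdsWithin] with r' hr'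
  have hlt : ⨅ y ∈ F x, f (x, y) < (r' : EReal) :=
    lt_of_le_of_lt hr (EReal.coe_lt_coe_iff.2 hr')
  simp only [iInf_lt_iff] at hlt
  obtain ⟨y, hy, hfy⟩ := hlt
  exact ⟨((x, y), r'), ⟨hfy.le, hy⟩, rfl⟩

theorem optimal_value_nearlyConvex_general {E P : Type*}
    [NormedAddCommGroup E] [NormedSpace ℝ E] [FiniteDimensional ℝ E]
    [NormedAddCommGroup P] [NormedSpace ℝ P] [FiniteDimensional ℝ P]
    {f : E × P → EReal} {F : E → Set P} (hf : NearlyConvex (epiF f)) (hF : NearlyConvex (gph F))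
    (hqc : (ri (domF f) ∩ ri (gph F)).Nonempty) : NearlyConvex (epiF (optimalValue f F)) := by
  let π : (E × P) × ℝ →ᴬ[ℝ] E × P := (ContinuousLinearMap.fst ℝ (E × P) ℝ).toContinuousAffineMap
  let ρ : (E × P) × ℝ →ᴬ[ℝ] E × ℝ := ((ContinuousLinearMap.fst ℝ E P).prodMap
    (ContinuousLinearMap.id ℝ ℝ)).toContinuousAffineMap
  have hcommon : (ri (epiF f) ∩ ri (π ⁻¹' gph F)).Nonempty := by
    obtain ⟨z, hzf, hzF⟩ := hqc
    rw [← image_fst_epiF] at hzf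
    obtain ⟨q, hqf, rfl⟩ := hf.ri_image_subset (π : (E × P) × ℝ →ᵃ[ℝ] E × P) hzf
    exact ⟨q, hqf, preimage_ri_subset π (gph F) hzF⟩
  have hinter : NearlyConvex (epiF f ∩ π ⁻¹' gph F) :=
    hf.inter (hF.preimage π isOpenMap_fst) hcommon
  exact (hinter.image ρ).of_subset_closure (image_subset_epiF_optimalValue f F)
    (epiF_optimalValue_subset_closure f F)

end OptimalValue

theorem optimal_value_nearlyConvex (n p : ℕ)
    (f : EuclideanSpace ℝ (Fin n) × EuclideanSpace ℝ (Fin p) → EReal)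
    (F : EuclideanSpace ℝ (Fin n) → Set (EuclideanSpace ℝ (Fin p)))
    (hfp : ProperFn f) (hf : NearlyConvex (epiF f)) (hF : NearlyConvex (gph F))
    (hqc : (ri (domF f) ∩ ri (gph F)).Nonempty) :
    NearlyConvex (epiF (fun x => ⨅ y ∈ F x, f (x, y))) :=
  optimal_value_nearlyConvex_general hf hF hqc
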